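/- Let k be a field, G a bipartite graph on vertex set X ⊔ Y with X = {x_1,…,x_n} and Y = {y_1,…,y_m}, let I ⊆ k[X ⊔ Y] be the edge ideal of G, and let J be the edge ideal of the Ferrers graph H associated with G. Then for every subset X' ⊆ X and every i ≥ 0, the Z^n-graded Betti numbers satisfy β_{i,X',•}(I) ≥ β_{i,X',•}(J). -/

import Mathlib

open Finset

/-- An abstract simplicial complex on the vertex type `V`: a collection of
finite subsets of `V` (the *faces*) closed under taking subsets. -/
structure SimpComplex (V : Type*) where
  faces : Set (Finset V)
  down_closed : ∀ F ∈ faces, ∀ G ⊆ F, G ∈ faces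

namespace SimpComplex

variable {V : Type*}

/-- The induced subcomplex `Γ[W]` of `Γ` on a set `W` of vertices. -/
def induced (K : SimpComplex V) (W : Finset V) : SimpComplex V where
  faces := {F | F ∈ K.faces ∧ F ⊆ W}
  down_closed := fun F hF G hG => ⟨K.down_closed F hF.1 G hG, hG.trans hF.2⟩

/-- A simplicial complex is a cone with apex `v` if `v` belongs to every
maximal face. -/
def IsConeWithApex (K : SimpComplex V) (v : V) : Prop :=
  ∀ F ∈ K.faces, (∀ G ∈ K.faces, F ⊆ G → G = F) → v ∈ F

variable [LinearOrder V] [Fintype V] (k : Type*) [Field k]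

/-- The faces of cardinality `c` of a simplicial complex, as a type. -/
def Face (K : SimpComplex V) (c : ℕ) : Type _ :=
  {F : Finset V // F ∈ K.faces ∧ F.card = c}

/-- The space of simplicial chains with coefficients in `k` in (reduced)
homological degree `c - 1`; it has a basis indexed by the faces of
cardinality `c`. -/
abbrev Chains (K : SimpComplex V) (c : ℕ) : Type _ := Face K c → k

/-- The simplicial boundary map, from chains on faces of cardinality `c + 1`
to chains on faces of cardinality `c`, expressed in coordinates:  the
coefficient of a face `G` in `∂ x` is a signed sum of the coefficients of
`x` at the faces `G ∪ {v}`, with the usual signs determined by the linear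
order on the vertices. -/
noncomputable def boundary (K : SimpComplex V) (c : ℕ) :
    Chains k K (c + 1) →ₗ[k] Chains k K c where
  toFun x G := ∑ v ∈ (Finset.univ \ G.1).attach,
    letI := Classical.dec (insert v.1 G.1 ∈ K.faces)
    if h : insert v.1 G.1 ∈ K.faces then
      ((-1 : k) ^ (G.1.filter (fun w => w < v.1)).card) *
        x ⟨insert v.1 G.1, h, by
          have hv : v.1 ∉ G.1 := (Finset.mem_sdiff.mp v.2).2
          rw [Finset.card_insert_of_notMem hv, G.2.2]⟩
    else 0
  map_add' x y := by
    funext G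
    simp only [Pi.add_apply]
    rw [← Finset.sum_add_distrib]
    refine Finset.sum_congr rfl fun v _ => ?_
    split
    · exact mul_add _ (x _) (y _)
    · simp
  map_smul' a x := by
    funext G
    simp only [Pi.smul_apply, RingHom.id_apply, smul_eq_mul, Finset.mul_sum]
    refine Finset.sum_congr rfl fun v _ => ?_
    split
    · exact mul_left_comm _ a (x _)
    · simp

/-- The `j`-th reduced simplicial homology `H̃_j(K; k)` (for `j : ℕ`):
cycles supported on faces of cardinality `j + 1` modulo boundaries of chains on
faces of cardinality `j + 2`.  (Note that the empty set is a face of every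
nonvoid complex, so this is reduced homology.) -/
@[reducible] noncomputable def reducedHomology (K : SimpComplex V) (j : ℕ) : Type _ :=
  LinearMap.ker (boundary k K j) ⧸
    Submodule.comap (LinearMap.ker (boundary k K j)).subtype
      (LinearMap.range (boundary k K (j + 1)))

/-- The `j`-th reduced Betti number `β̃_j(K) = dim_k H̃_j(K; k)`. -/
noncomputable def reducedBetti (K : SimpComplex V) (j : ℕ) : ℕ :=
  Module.finrank k (reducedHomology k K j)

/-- Hochster's formula, used as the definition of the fine graded Betti numbers
(graded by squarefree multidegrees, i.e. by subsets `W` of the variables) of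
the squarefree monomial ideal `I_K` whose Stanley–Reisner complex is `K`:
`β_{i,W}(I_K) = dim_k H̃_{|W| - i - 2}(K[W]; k)`. -/
noncomputable def bettiFine (K : SimpComplex V) (i : ℕ) (W : Finset V) : ℕ :=
  if i + 2 ≤ W.card then reducedBetti k (K.induced W) (W.card - i - 2) else 0

/-- The total (ungraded) Betti number `β_i`, the sum of all the fine graded
Betti numbers. -/
noncomputable def totalBetti (K : SimpComplex V) (i : ℕ) : ℕ :=
  ∑ W : Finset V, bettiFine k K i W

end SimpComplex

open SimpComplex

/-- The vertex `x_i` of `X = {x_1, …, x_n}` inside `X ⊔ Y = Fin (n + m)`. -/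
def xVert {n m : ℕ} (i : Fin n) : Fin (n + m) := Fin.castAdd m i

/-- The vertex `y_j` of `Y = {y_1, …, y_m}` inside `X ⊔ Y = Fin (n + m)`. -/
def yVert {n m : ℕ} (j : Fin m) : Fin (n + m) := Fin.natAdd n j

/-- A bipartite graph `G` on `X ⊔ Y` is given by its edge set `E ⊆ X × Y`.
`nbr E i` is the neighborhood `N(x_i) ⊆ Y` of the vertex `x_i` in `G`. -/
def nbr {n m : ℕ} (E : Finset (Fin n × Fin m)) (i : Fin n) : Finset (Fin m) :=
  Finset.univ.filter fun j => (i, j) ∈ E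

/-- The degree `deg_G x_i = |N(x_i)|`. -/
def degG {n m : ℕ} (E : Finset (Fin n × Fin m)) (i : Fin n) : ℕ := (nbr E i).card

/-- The Ferrers graph `H` associated to the bipartite graph `E`: the vertex
`x_i` is joined to exactly `y_1, …, y_{deg_G x_i}`. -/
def ferrers {n m : ℕ} (E : Finset (Fin n × Fin m)) : Finset (Fin n × Fin m) :=
  Finset.univ.filter fun p => (p.2 : ℕ) < degG E p.1

/-- The independence complex of the bipartite graph `E` (faces are the subsets
of `X ⊔ Y` containing no edge), i.e. the Stanley–Reisner complex `Δ(I)` of the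
edge ideal `I` of `E`. -/
def indepComplex {n m : ℕ} (E : Finset (Fin n × Fin m)) : SimpComplex (Fin (n + m)) where
  faces := {F | ∀ p ∈ E, ¬(xVert p.1 ∈ F ∧ yVert p.2 ∈ F)}
  down_closed := fun _ hF _ hG p hp hc => hF p hp ⟨hG hc.1, hG hc.2⟩

/-- The subset `X' ⊔ Y'` of the vertex set `X ⊔ Y = Fin (n + m)`. -/
def vset {n m : ℕ} (X' : Finset (Fin n)) (Y' : Finset (Fin m)) : Finset (Fin (n + m)) :=
  X'.image xVert ∪ Y'.image yVert

/-- The `ℤ^n`-graded Betti number `β_{i,X',•}(I)` of the edge ideal `I` of the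
bipartite graph `E`, in the grading with `deg x_i = e_i` and `deg y_j = 0`:
it is the sum of the fine graded Betti numbers `β_{i, X' ⊔ Y'}(I)` over all
`Y' ⊆ Y`. -/
noncomputable def bettiCoarse (k : Type*) [Field k] {n m : ℕ}
    (E : Finset (Fin n × Fin m)) (i : ℕ) (X' : Finset (Fin n)) : ℕ :=
  ∑ Y' : Finset (Fin m), bettiFine k (indepComplex E) i (vset X' Y')

/-- The binomial coefficient `C(a, b)` with an integer lower argument, which is
zero when `b < 0`. -/
def chooseInt (a : ℕ) (b : ℤ) : ℕ := if 0 ≤ b then a.choose b.toNat else 0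

/-!
By Hochster's formula both sides count reduced homology of independence complexes. Joining with a
vertex `v` is a contracting homotopy of the full simplex, and it yields the long exact sequence
relating a complex to the deletion and the link of `v`; in an independence complex these are again
independence complexes, of `W \ v` and of the non-neighbours of `v` in `W`.

Let `x₀` have the smallest degree among the vertices of `X'`. If `N(x₀) ⊆ N(x)` for all `x ∈ X'`,
as in a Ferrers graph, then the other `x` can be deleted without changing homology, what remains is
a star (or has an isolated vertex), and the Betti number counts the nonempty `Y' ⊆ N(x₀)` of one
fixed cardinality. For a general graph, replacing `X' ⊔ Y'` by the link of a vertex `y ∉ N(x₀)`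
bounds the homology of the link by that of `X' ⊔ Y'` and `X' ⊔ (Y' ∪ {y})`. Once all `y ∉ N(x₀)`
have been used, only those `x` with `N(x) ⊆ N(x₀)` are left; by minimality they have the same
neighbours as `x₀`, so the Betti number is at least the same count.
-/

section Subquotient

variable {k : Type*} [DivisionRing k]
  {M₁ M₂ M₃ : Type*} [AddCommGroup M₁] [Module k M₁] [AddCommGroup M₂] [Module k M₂]
  [AddCommGroup M₃] [Module k M₃]

/-- The dimension of the subquotient `Z / (Z ∩ B)`, used for homology spaces, where `Z` are the
cycles and `B` the boundaries; `B ≤ Z` is not part of the definition. -/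
noncomputable def subquotientFinrank (Z B : Submodule k M₁) : ℕ :=
  Module.finrank k (Z ⧸ B.comap Z.subtype)

theorem subquotientFinrank_eq_zero {Z B : Submodule k M₁} (h : Z ≤ B) :
    subquotientFinrank Z B = 0 := by
  rw [subquotientFinrank, Submodule.comap_subtype_eq_top.2 h]
  exact Module.finrank_zero_of_subsingleton

theorem subquotientFinrank_bot (Z : Submodule k M₁) :
    subquotientFinrank Z ⊥ = Module.finrank k Z := by
  rw [subquotientFinrank, Submodule.comap_bot, Submodule.ker_subtype]
  exact (Submodule.quotEquivOfEqBot _ rfl).finrank_eq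

theorem subquotientFinrank_map {f : M₁ →ₗ[k] M₂} (hf : Function.Injective f)
    (Z B : Submodule k M₁) :
    subquotientFinrank (Z.map f) (B.map f) = subquotientFinrank Z B := by
  refine (Submodule.Quotient.equiv _ _ (Submodule.equivMapOfInjective f hf Z) ?_).finrank_eq.symm
  ext ⟨_, z, hz, rfl⟩
  constructor
  · rintro ⟨⟨b, hb⟩, hbB, hbz⟩
    exact ⟨b, hbB, congrArg Subtype.val hbz⟩
  · rintro ⟨b, hbB, hbz⟩
    exact ⟨⟨z, hz⟩, hf hbz ▸ hbB, rfl⟩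

variable [Module.Finite k M₁] [Module.Finite k M₂] [Module.Finite k M₃]

theorem subquotientFinrank_le_add_of_exact {Z₁ B₁ : Submodule k M₁} {Z₂ B₂ : Submodule k M₂}
    {Z₃ B₃ : Submodule k M₃} (f : M₁ →ₗ[k] M₂) (g : M₂ →ₗ[k] M₃)
    (hfZ : Z₁ ≤ Z₂.comap f) (hfB : B₁ ≤ B₂.comap f)
    (hgZ : Z₂ ≤ Z₃.comap g) (hgB : B₂ ≤ B₃.comap g)
    (hexact : ∀ z ∈ Z₂, g z ∈ B₃ → ∃ a ∈ Z₁, z - f a ∈ B₂) :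
    subquotientFinrank Z₂ B₂ ≤ subquotientFinrank Z₁ B₁ + subquotientFinrank Z₃ B₃ := by
  let f' : (Z₁ ⧸ B₁.comap Z₁.subtype) →ₗ[k] (Z₂ ⧸ B₂.comap Z₂.subtype) :=
    Submodule.mapQ _ _ (f.restrict hfZ) fun _ hz => hfB hz
  let g' : (Z₂ ⧸ B₂.comap Z₂.subtype) →ₗ[k] (Z₃ ⧸ B₃.comap Z₃.subtype) :=
    Submodule.mapQ _ _ (g.restrict hgZ) fun _ hz => hgB hz
  have hker : LinearMap.ker g' ≤ LinearMap.range f' := by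
    intro z hz
    obtain ⟨z, rfl⟩ := Submodule.Quotient.mk_surjective _ z
    have hgz : (⟨g z, hgZ z.2⟩ : Z₃) ∈ B₃.comap Z₃.subtype :=
      (Submodule.Quotient.mk_eq_zero _).1 hz
    obtain ⟨a, ha, hab⟩ := hexact z z.2 hgz
    refine ⟨Submodule.Quotient.mk ⟨a, ha⟩, Eq.symm ?_⟩
    exact (Submodule.Quotient.eq (B₂.comap Z₂.subtype) (y := ⟨f a, hfZ ha⟩)).2 hab
  calc subquotientFinrank Z₂ B₂
      = Module.finrank k (LinearMap.range g') + Module.finrank k (LinearMap.ker g') :=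
        (LinearMap.finrank_range_add_finrank_ker g').symm
    _ ≤ subquotientFinrank Z₃ B₃ + subquotientFinrank Z₁ B₁ :=
        add_le_add (Submodule.finrank_le _)
          ((Submodule.finrank_mono hker).trans (LinearMap.finrank_range_le f'))
    _ = _ := add_comm _ _

end Subquotient

namespace SimpComplex

section Operators

variable {V : Type*} [LinearOrder V] (k : Type*) [CommRing k]

/-- The sign `(-1)^#{w ∈ G | w < v}` of the face `G` in the boundary of `insert v G`. -/
def insertSign (v : V) (G : Finset V) : k := (-1) ^ (G.filter (· < v)).card

/-- Contraction with the vertex `v`, i.e. the part of the boundary operator that removes `v`.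
Chains of the full simplex on `V` are encoded as functions `Finset V → k`, in all degrees at
once. -/
def contract (v : V) : (Finset V → k) →ₗ[k] (Finset V → k) :=
  LinearMap.pi fun G => if v ∈ G then 0 else insertSign k v G • LinearMap.proj (insert v G)

/-- Join with the vertex `v`: the adjoint of `contract k v`, sending a face `G` not containing `v`
to `± insert v G`. -/
def join (v : V) : (Finset V → k) →ₗ[k] (Finset V → k) :=
  LinearMap.pi fun G =>
    if v ∈ G then insertSign k v (G.erase v) • LinearMap.proj (G.erase v) else 0

variable {k}

theorem insertSign_mul_self (v : V) (G : Finset V) :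
    insertSign k v G * insertSign k v G = 1 := by
  rw [insertSign, ← mul_pow, neg_one_mul, neg_neg, one_pow]

theorem insertSign_insert {u v : V} {G : Finset V} (hu : u ∉ G) :
    insertSign k v (insert u G) = (if u < v then -1 else 1) * insertSign k v G := by
  unfold insertSign
  rw [Finset.filter_insert]
  split_ifs
  · rw [Finset.card_insert_of_notMem (by simp [hu]), pow_succ']
  · rw [one_mul]

theorem insertSign_mul_insertSign_insert {u v : V} (huv : u ≠ v) {G : Finset V}
    (hu : u ∉ G) (hv : v ∉ G) :
    insertSign k u G * insertSign k v (insert u G) =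
      -(insertSign k v G * insertSign k u (insert v G)) := by
  rw [insertSign_insert hu, insertSign_insert hv]
  rcases huv.lt_or_gt with h | h <;> simp only [h, h.not_gt, if_true, if_false] <;> ring

theorem insertSign_insert_mul_insertSign_insert {u v : V} (huv : u ≠ v) {G : Finset V}
    (hu : u ∉ G) (hv : v ∉ G) :
    insertSign k u (insert v G) * insertSign k v (insert u G) =
      -(insertSign k v G * insertSign k u G) := by
  rw [insertSign_insert hu, insertSign_insert hv]
  rcases huv.lt_or_gt with h | h <;> simp only [h, h.not_gt, if_true, if_false] <;> ring

theorem contract_apply (v : V) (f : Finset V → k) (G : Finset V) :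
    contract k v f G = if v ∈ G then 0 else insertSign k v G * f (insert v G) := by
  by_cases h : v ∈ G <;> simp [contract, h]

theorem join_apply (v : V) (f : Finset V → k) (G : Finset V) :
    join k v f G = if v ∈ G then insertSign k v (G.erase v) * f (G.erase v) else 0 := by
  by_cases h : v ∈ G <;> simp [join, h]

theorem contract_contract_self (v : V) (f : Finset V → k) : contract k v (contract k v f) = 0 := by
  funext G
  simp [contract_apply]

theorem contract_contract (u v : V) (f : Finset V → k) :
    contract k u (contract k v f) = -contract k v (contract k u f) := by
  rcases eq_or_ne u v with rfl | huv
  · rw [contract_contract_self, neg_zero]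
  funext G
  by_cases hu : u ∈ G
  · simp [contract_apply, hu]
  by_cases hv : v ∈ G
  · simp [contract_apply, hv]
  simp only [contract_apply, Pi.neg_apply, Finset.mem_insert, hu, hv, huv, huv.symm, or_self,
    if_false, ← mul_assoc, insertSign_mul_insertSign_insert huv hu hv, Finset.insert_comm v u G]
  ring

theorem contract_join_self (v : V) (f : Finset V → k) :
    contract k v (join k v f) + join k v (contract k v f) = f := by
  funext G
  by_cases h : v ∈ G <;>
    simp [contract_apply, join_apply, h, ← mul_assoc, insertSign_mul_self]

theorem contract_join_of_contract_eq_zero {v : V} {f : Finset V → k} (hf : contract k v f = 0) :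
    contract k v (join k v f) = f := by
  simpa only [hf, map_zero, add_zero] using contract_join_self v f

theorem contract_join_of_ne {u v : V} (huv : u ≠ v) (f : Finset V → k) :
    contract k u (join k v f) = -join k v (contract k u f) := by
  funext G
  by_cases hv : v ∈ G
  swap
  · simp [contract_apply, join_apply, hv, huv.symm]
  by_cases hu : u ∈ G
  · simp [contract_apply, join_apply, hu, huv]
  obtain ⟨H, hvH, rfl⟩ : ∃ H, v ∉ H ∧ insert v H = G :=
    ⟨G.erase v, Finset.notMem_erase v G, Finset.insert_erase hv⟩
  rw [Finset.mem_insert, not_or] at hu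
  have hvu : v ∉ insert u H := by simp [hvH, huv.symm]
  simp only [contract_apply, join_apply, Pi.neg_apply, Finset.mem_insert, huv, hu.2, or_self,
    true_or, if_true, if_false, Finset.insert_comm u v H, Finset.erase_insert hvu,
    Finset.erase_insert hvH, ← mul_assoc,
    insertSign_insert_mul_insertSign_insert huv hu.2 hvH]
  ring

variable [Fintype V] (k)

/-- The boundary operator of the full simplex on `V`, on the chains of all degrees at once; every
complex on `V` gets its boundary operators from this one by restriction. -/
def simplexBoundary : (Finset V → k) →ₗ[k] (Finset V → k) := ∑ v, contract k v

variable {k}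

theorem simplexBoundary_eq_sum (f : Finset V → k) :
    simplexBoundary k f = ∑ v, contract k v f := by
  rw [simplexBoundary, LinearMap.sum_apply]

theorem simplexBoundary_apply (f : Finset V → k) (G : Finset V) :
    simplexBoundary k f G = ∑ v ∈ Finset.univ \ G, insertSign k v G * f (insert v G) := by
  simp only [simplexBoundary_eq_sum, Finset.sum_apply, contract_apply, ← ite_not (_ ∈ G),
    ← Finset.sum_filter, Finset.sdiff_eq_filter]

theorem contract_simplexBoundary (v : V) (f : Finset V → k) :
    contract k v (simplexBoundary k f) = -simplexBoundary k (contract k v f) := by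
  simp only [simplexBoundary_eq_sum, map_sum, ← Finset.sum_neg_distrib]
  exact Finset.sum_congr rfl fun u _ => contract_contract v u f

theorem simplexBoundary_join (v : V) (f : Finset V → k) :
    simplexBoundary k (join k v f) = f - join k v (simplexBoundary k f) := by
  have hne : ∀ u ∈ Finset.univ.erase v,
      contract k u (join k v f) = -join k v (contract k u f) := fun u hu =>
    contract_join_of_ne (Finset.ne_of_mem_erase hu) f
  rw [simplexBoundary_eq_sum, simplexBoundary_eq_sum, map_sum,
    ← Finset.add_sum_erase _ _ (Finset.mem_univ v),
    ← Finset.add_sum_erase _ (fun u => join k v (contract k u f)) (Finset.mem_univ v),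
    Finset.sum_congr rfl hne, Finset.sum_neg_distrib]
  linear_combination contract_join_self v f

theorem simplexBoundary_simplexBoundary (f : Finset V → k) :
    simplexBoundary k (simplexBoundary k f) = 0 := by
  simp only [simplexBoundary_eq_sum, map_sum]
  rw [← Finset.sum_product']
  refine Finset.sum_involution (fun p _ => p.swap) ?_ ?_ (by simp) (by simp)
  · intro p _
    simp [contract_contract p.1 p.2]
  · rintro ⟨u, v⟩ _ h h'
    simp only [Prod.swap_prod_mk, Prod.mk.injEq] at h'
    obtain ⟨rfl, -⟩ := h'
    exact h (contract_contract_self _ _)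

end Operators

section Chains

variable {V : Type*}

/-- The deletion of the vertex `v` from `K`. -/
def deletion (K : SimpComplex V) (v : V) : SimpComplex V where
  faces := {F | v ∉ F ∧ F ∈ K.faces}
  down_closed := fun F hF G hG => ⟨fun h => hF.1 (hG h), K.down_closed F hF.2 G hG⟩

/-- The link of the vertex `v` in `K`. -/
def link [DecidableEq V] (K : SimpComplex V) (v : V) : SimpComplex V where
  faces := {F | v ∉ F ∧ insert v F ∈ K.faces}
  down_closed := fun _ hF _ hG =>
    ⟨fun h => hF.1 (hG h), K.down_closed _ hF.2 _ (Finset.insert_subset_insert v hG)⟩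

variable (k : Type*) [CommRing k]

/-- The chains of the full simplex on `V` supported on the faces of `K` of cardinality `q`. -/
def chainSpace (K : SimpComplex V) (q : ℕ) : Submodule k (Finset V → k) :=
  Submodule.pi {F | F ∈ K.faces ∧ F.card = q}ᶜ fun _ => ⊥

variable {k} {K L : SimpComplex V} {v : V} {q : ℕ} {f : Finset V → k}

theorem mem_chainSpace :
    f ∈ chainSpace k K q ↔ ∀ F, f F ≠ 0 → F ∈ K.faces ∧ F.card = q :=
  forall_congr' fun _ => not_imp_comm

theorem chainSpace_mono (h : L.faces ⊆ K.faces) (q : ℕ) : chainSpace k L q ≤ chainSpace k K q :=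
  fun _ hf => mem_chainSpace.2 fun F hF => (mem_chainSpace.1 hf F hF).imp_left fun hFL => h hFL

theorem chainSpace_eq_bot (h : ∀ F ∈ K.faces, F.card ≠ q) : chainSpace k K q = ⊥ := by
  refine (Submodule.eq_bot_iff _).2 fun f hf => funext fun F => ?_
  by_contra hF
  obtain ⟨hFK, hFq⟩ := mem_chainSpace.1 hf F hF
  exact h F hFK hFq

theorem deletion_faces_subset : (K.deletion v).faces ⊆ K.faces := fun _ hF => hF.2

section LinearOrder

variable [LinearOrder V]

theorem link_faces_subset_deletion : (K.link v).faces ⊆ (K.deletion v).faces := fun _ hF =>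
  ⟨hF.1, K.down_closed _ hF.2 _ (Finset.subset_insert _ _)⟩

theorem mem_chainSpace_deletion :
    f ∈ chainSpace k (K.deletion v) q ↔ f ∈ chainSpace k K q ∧ contract k v f = 0 := by
  constructor
  · refine fun hf => ⟨chainSpace_mono deletion_faces_subset q hf, funext fun G => ?_⟩
    have hG : f (insert v G) = 0 := by
      by_contra h
      exact (mem_chainSpace.1 hf _ h).1.1 (Finset.mem_insert_self v G)
    rw [contract_apply, hG, mul_zero, ite_self, Pi.zero_apply]
  · rintro ⟨hf, hc⟩
    refine mem_chainSpace.2 fun F hF => ?_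
    obtain ⟨hFK, hFq⟩ := mem_chainSpace.1 hf F hF
    refine ⟨⟨fun hv => hF ?_, hFK⟩, hFq⟩
    have h := congrFun hc (F.erase v)
    rw [contract_apply, if_neg (Finset.notMem_erase v F), Finset.insert_erase hv] at h
    rw [← one_mul (f F), ← insertSign_mul_self v (F.erase v), mul_assoc, h, Pi.zero_apply, mul_zero]

theorem contract_mem_chainSpace_link (hf : f ∈ chainSpace k K (q + 1)) :
    contract k v f ∈ chainSpace k (K.link v) q := by
  refine mem_chainSpace.2 fun F hF => ?_
  rw [contract_apply] at hF
  split_ifs at hF with hv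
  · exact absurd rfl hF
  · obtain ⟨hK, hcard⟩ := mem_chainSpace.1 hf _ (right_ne_zero_of_mul hF)
    rw [Finset.card_insert_of_notMem hv] at hcard
    exact ⟨⟨hv, hK⟩, Nat.succ_injective hcard⟩

theorem join_mem_chainSpace (hL : ∀ F ∈ L.faces, insert v F ∈ K.faces)
    (hf : f ∈ chainSpace k L q) : join k v f ∈ chainSpace k K (q + 1) := by
  refine mem_chainSpace.2 fun F hF => ?_
  rw [join_apply] at hF
  split_ifs at hF with hv
  · obtain ⟨hFL, hcard⟩ := mem_chainSpace.1 hf _ (right_ne_zero_of_mul hF)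
    have hFK := hL _ hFL
    rw [Finset.insert_erase hv] at hFK
    exact ⟨hFK, by rw [← hcard, Finset.card_erase_add_one hv]⟩
  · exact absurd rfl hF

theorem join_mem_chainSpace_of_link (hf : f ∈ chainSpace k (K.link v) q) :
    join k v f ∈ chainSpace k K (q + 1) :=
  join_mem_chainSpace (L := K.link v) (fun _ hF => hF.2) hf

theorem contract_eq_zero_of_mem_chainSpace_link (hf : f ∈ chainSpace k (K.link v) q) :
    contract k v f = 0 :=
  (mem_chainSpace_deletion.1 (chainSpace_mono link_faces_subset_deletion q hf)).2

variable [Fintype V]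

theorem simplexBoundary_mem_chainSpace (hf : f ∈ chainSpace k K (q + 1)) :
    simplexBoundary k f ∈ chainSpace k K q := by
  rw [simplexBoundary_eq_sum]
  exact Submodule.sum_mem _ fun v _ => chainSpace_mono deletion_faces_subset q
    (chainSpace_mono link_faces_subset_deletion q (contract_mem_chainSpace_link hf))

theorem simplexBoundary_eq_zero_of_mem_chainSpace_zero (hf : f ∈ chainSpace k K 0) :
    simplexBoundary k f = 0 := by
  rw [simplexBoundary_eq_sum]
  refine Finset.sum_eq_zero fun v _ => funext fun G => ?_
  have hG : f (insert v G) = 0 := by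
    by_contra h
    exact Finset.insert_ne_empty v G (Finset.card_eq_zero.1 (mem_chainSpace.1 hf _ h).2)
  rw [contract_apply, hG, mul_zero, ite_self, Pi.zero_apply]

variable (k)

/-- The cycles of `K` supported on the faces of cardinality `q`, i.e. in homological
degree `q - 1`. -/
def cycles (K : SimpComplex V) (q : ℕ) : Submodule k (Finset V → k) :=
  chainSpace k K q ⊓ LinearMap.ker (simplexBoundary k)

/-- The boundaries of `K` supported on the faces of cardinality `q`, i.e. in homological
degree `q - 1`. -/
def boundaries (K : SimpComplex V) (q : ℕ) : Submodule k (Finset V → k) :=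
  (chainSpace k K (q + 1)).map (simplexBoundary k)

variable {k}

theorem mem_cycles : f ∈ cycles k K q ↔ f ∈ chainSpace k K q ∧ simplexBoundary k f = 0 := Iff.rfl

theorem cycles_mono (h : L.faces ⊆ K.faces) (q : ℕ) : cycles k L q ≤ cycles k K q :=
  inf_le_inf_right _ (chainSpace_mono h q)

theorem boundaries_mono (h : L.faces ⊆ K.faces) (q : ℕ) : boundaries k L q ≤ boundaries k K q :=
  Submodule.map_mono (chainSpace_mono h (q + 1))

theorem contract_mem_cycles_link (hf : f ∈ cycles k K (q + 1)) :
    contract k v f ∈ cycles k (K.link v) q := by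
  obtain ⟨hfK, hf₀⟩ := mem_cycles.1 hf
  refine mem_cycles.2 ⟨contract_mem_chainSpace_link hfK, ?_⟩
  rw [← neg_eq_zero, ← contract_simplexBoundary, hf₀, map_zero]

theorem contract_mem_boundaries_link (hf : f ∈ boundaries k K (q + 1)) :
    contract k v f ∈ boundaries k (K.link v) q := by
  obtain ⟨e, he, rfl⟩ := hf
  refine ⟨-contract k v e, neg_mem (contract_mem_chainSpace_link he), ?_⟩
  rw [map_neg, contract_simplexBoundary]

end LinearOrder

end Chains

section Homology

variable {V : Type*} [LinearOrder V] [Fintype V] (k : Type*) [Field k] {K : SimpComplex V} {v : V}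

/-- The dimension of the reduced homology of `K` in degree `q - 1`, computed inside the chains of
the full simplex. Indexing by the cardinality `q` of the faces includes degree `-1`. -/
noncomputable def homologyDim (K : SimpComplex V) (q : ℕ) : ℕ :=
  subquotientFinrank (cycles k K q) (boundaries k K q)

theorem homologyDim_link_le (K : SimpComplex V) (v : V) (q : ℕ) :
    homologyDim k (K.link v) q ≤ homologyDim k K (q + 1) + homologyDim k (K.deletion v) q := by
  refine subquotientFinrank_le_add_of_exact (contract k v) LinearMap.id
    (fun _ => contract_mem_cycles_link) (fun _ => contract_mem_boundaries_link)
    (cycles_mono link_faces_subset_deletion q) (boundaries_mono link_faces_subset_deletion q) ?_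
  rintro z hz ⟨e, he, hez⟩
  rw [LinearMap.id_apply] at hez
  obtain ⟨hzL, hz₀⟩ := mem_cycles.1 hz
  obtain ⟨heK, he₀⟩ := mem_chainSpace_deletion.1 he
  refine ⟨join k v z - e,
    mem_cycles.2 ⟨sub_mem (join_mem_chainSpace_of_link hzL) heK, ?_⟩, ?_⟩
  · rw [map_sub, simplexBoundary_join, hz₀, hez, map_zero, sub_zero, sub_self]
  · rw [map_sub, he₀, sub_zero, contract_join_of_contract_eq_zero
      (contract_eq_zero_of_mem_chainSpace_link hzL), sub_self]
    exact zero_mem _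

theorem homologyDim_le_deletion_add_link (K : SimpComplex V) (v : V) (q : ℕ) :
    homologyDim k K (q + 1) ≤
      homologyDim k (K.deletion v) (q + 1) + homologyDim k (K.link v) q := by
  refine subquotientFinrank_le_add_of_exact LinearMap.id (contract k v)
    (cycles_mono deletion_faces_subset _) (boundaries_mono deletion_faces_subset _)
    (fun _ => contract_mem_cycles_link) (fun _ => contract_mem_boundaries_link) ?_
  rintro z hz ⟨e, he, hez⟩
  obtain ⟨hzK, hz₀⟩ := mem_cycles.1 hz
  have hje : join k v e ∈ chainSpace k K (q + 1 + 1) := join_mem_chainSpace_of_link he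
  refine ⟨z + simplexBoundary k (join k v e), mem_cycles.2 ⟨mem_chainSpace_deletion.2
    ⟨add_mem hzK (simplexBoundary_mem_chainSpace hje), ?_⟩, ?_⟩, ⟨-join k v e, neg_mem hje, ?_⟩⟩
  · rw [map_add, contract_simplexBoundary, contract_join_of_contract_eq_zero
      (contract_eq_zero_of_mem_chainSpace_link he), hez, add_neg_cancel]
  · rw [map_add, hz₀, simplexBoundary_simplexBoundary, add_zero]
  · rw [LinearMap.id_apply, map_neg, sub_add_cancel_left]

theorem homologyDim_deletion_le (K : SimpComplex V) (v : V) (q : ℕ) :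
    homologyDim k (K.deletion v) q ≤ homologyDim k (K.link v) q + homologyDim k K q := by
  refine subquotientFinrank_le_add_of_exact LinearMap.id LinearMap.id
    (cycles_mono link_faces_subset_deletion q) (boundaries_mono link_faces_subset_deletion q)
    (cycles_mono deletion_faces_subset q) (boundaries_mono deletion_faces_subset q) ?_
  rintro z hz ⟨e, he, hez⟩
  rw [LinearMap.id_apply] at hez
  have hzv : contract k v z = 0 := (mem_chainSpace_deletion.1 hz.1).2
  have hce : contract k v e ∈ chainSpace k (K.link v) q := contract_mem_chainSpace_link he
  have hce₀ : simplexBoundary k (contract k v e) = 0 := by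
    rw [← neg_eq_zero, ← contract_simplexBoundary, hez, hzv]
  refine ⟨contract k v e, mem_cycles.2 ⟨hce, hce₀⟩, e - join k v (contract k v e),
    mem_chainSpace_deletion.2 ⟨sub_mem he (join_mem_chainSpace_of_link hce), ?_⟩, ?_⟩
  · rw [map_sub, contract_join_of_contract_eq_zero (contract_contract_self v e), sub_self]
  · rw [map_sub, simplexBoundary_join, hce₀, hez, map_zero, sub_zero, LinearMap.id_apply]

theorem homologyDim_eq_deletion_of_link_eq_zero
    (h : ∀ q, homologyDim k (K.link v) q = 0) (q : ℕ) :
    homologyDim k K (q + 1) = homologyDim k (K.deletion v) (q + 1) := by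
  refine le_antisymm ?_ ?_
  · simpa only [h, add_zero] using homologyDim_le_deletion_add_link k K v q
  · simpa only [h, zero_add] using homologyDim_deletion_le k K v (q + 1)

theorem homologyDim_eq_zero_of_forall_insert_mem (h : ∀ F ∈ K.faces, insert v F ∈ K.faces)
    (q : ℕ) : homologyDim k K q = 0 := by
  refine subquotientFinrank_eq_zero fun z hz => ?_
  obtain ⟨hzK, hz₀⟩ := mem_cycles.1 hz
  refine ⟨join k v z, join_mem_chainSpace h hzK, ?_⟩
  rw [simplexBoundary_join, hz₀, map_zero, sub_zero]

end Homology

section ExtendByZero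

variable {V : Type*} (k : Type*) [Field k]

/-- Extension by zero of the chains of `K` to chains of the full simplex on `V`. -/
noncomputable def extendChain (K : SimpComplex V) (c : ℕ) : Chains k K c →ₗ[k] (Finset V → k) :=
  Function.ExtendByZero.linearMap k Subtype.val

variable {k} {K : SimpComplex V} {c : ℕ}

theorem extendChain_apply_of_face (x : Chains k K c) (F : Face K c) :
    extendChain k K c x F.1 = x F :=
  Subtype.val_injective.extend_apply x (0 : Finset V → k) F

theorem extendChain_apply_eq_zero (x : Chains k K c) {F : Finset V}
    (hF : ¬(F ∈ K.faces ∧ F.card = c)) : extendChain k K c x F = 0 :=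
  Function.extend_apply' x (0 : Finset V → k) F fun ⟨G, hG⟩ => hF (hG ▸ G.2)

theorem extendChain_injective : Function.Injective (extendChain k K c) :=
  Function.extend_injective Subtype.val_injective (0 : Finset V → k)

theorem range_extendChain : LinearMap.range (extendChain k K c) = chainSpace k K c := by
  ext f
  constructor
  · rintro ⟨x, rfl⟩
    exact mem_chainSpace.2 fun F hF => not_imp_comm.1 (extendChain_apply_eq_zero x) hF
  · refine fun hf => ⟨fun F => f F.1, funext fun F => ?_⟩
    by_cases hF : F ∈ K.faces ∧ F.card = c
    · exact extendChain_apply_of_face _ ⟨F, hF⟩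
    · rw [extendChain_apply_eq_zero _ hF, not_imp_comm.1 (mem_chainSpace.1 hf F) hF]

theorem finrank_chainSpace [Finite V] (K : SimpComplex V) (q : ℕ) :
    Module.finrank k (chainSpace k K q) = Nat.card (Face K q) := by
  have : Fintype (Face K q) := @Fintype.ofFinite _ Subtype.finite
  rw [← range_extendChain, LinearMap.finrank_range_of_inj extendChain_injective,
    Module.finrank_fintype_fun_eq_card, Nat.card_eq_fintype_card]

variable [LinearOrder V] [Fintype V]

theorem boundary_apply (x : Chains k K (c + 1)) (G : Face K c) :
    boundary k K c x G = ∑ v ∈ Finset.univ \ G.1,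
      insertSign k v G.1 * extendChain k K (c + 1) x (insert v G.1) := by
  rw [← Finset.sum_attach]
  refine Finset.sum_congr rfl fun v _ => ?_
  have hcard : (insert v.1 G.1).card = c + 1 := by
    rw [Finset.card_insert_of_notMem (Finset.mem_sdiff.1 v.2).2, G.2.2]
  by_cases h : insert v.1 G.1 ∈ K.faces
  · rw [dif_pos h, extendChain_apply_of_face x ⟨insert v.1 G.1, h, hcard⟩, insertSign]
  · rw [dif_neg h, extendChain_apply_eq_zero x fun h' => h h'.1, mul_zero]

theorem simplexBoundary_comp_extendChain (K : SimpComplex V) (c : ℕ) :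
    simplexBoundary k ∘ₗ extendChain k K (c + 1) = extendChain k K c ∘ₗ boundary k K c := by
  refine LinearMap.ext fun x => funext fun G => ?_
  rw [LinearMap.comp_apply, LinearMap.comp_apply]
  by_cases hG : G ∈ K.faces ∧ G.card = c
  · rw [simplexBoundary_apply, extendChain_apply_of_face _ ⟨G, hG⟩]
    exact (boundary_apply x ⟨G, hG⟩).symm
  · have hx : simplexBoundary k (extendChain k K (c + 1) x) ∈ chainSpace k K c :=
      simplexBoundary_mem_chainSpace (range_extendChain.le (LinearMap.mem_range_self _ x))
    rw [extendChain_apply_eq_zero _ hG, not_imp_comm.1 (mem_chainSpace.1 hx G) hG]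

theorem map_extendChain_ker_boundary (K : SimpComplex V) (c : ℕ) :
    (LinearMap.ker (boundary k K c)).map (extendChain k K (c + 1)) = cycles k K (c + 1) := by
  have hker : LinearMap.ker (boundary k K c) =
      (LinearMap.ker (simplexBoundary k)).comap (extendChain k K (c + 1)) := by
    rw [← LinearMap.ker_comp, simplexBoundary_comp_extendChain,
      LinearMap.ker_comp_of_ker_eq_bot _ (LinearMap.ker_eq_bot.2 extendChain_injective)]
  rw [hker, Submodule.map_comap_eq, range_extendChain, cycles]

theorem map_extendChain_range_boundary (K : SimpComplex V) (c : ℕ) :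
    (LinearMap.range (boundary k K c)).map (extendChain k K c) = boundaries k K c := by
  rw [← LinearMap.range_comp, ← simplexBoundary_comp_extendChain, LinearMap.range_comp,
    range_extendChain, boundaries]

theorem reducedBetti_eq_homologyDim (K : SimpComplex V) (j : ℕ) :
    reducedBetti k K j = homologyDim k K (j + 1) := by
  rw [homologyDim, ← map_extendChain_ker_boundary, ← map_extendChain_range_boundary,
    subquotientFinrank_map extendChain_injective]
  rfl

theorem homologyDim_of_faces_eq_singleton_empty (hK : K.faces = {∅}) (q : ℕ) :
    homologyDim k K q = if q = 0 then 1 else 0 := by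
  have hbot : ∀ q ≠ 0, chainSpace k K q = ⊥ := by
    refine fun q hq => chainSpace_eq_bot fun F hF hFq => hq ?_
    rw [hK, Set.mem_singleton_iff] at hF
    rw [← hFq, hF, Finset.card_empty]
  split_ifs with hq
  · subst hq
    have hcycles : cycles k K 0 = chainSpace k K 0 :=
      inf_eq_left.2 fun f (hf : f ∈ chainSpace k K 0) =>
        simplexBoundary_eq_zero_of_mem_chainSpace_zero hf
    have : Unique (Face K 0) :=
      { default := ⟨∅, by simp [hK]⟩, uniq := fun F => Subtype.ext (Finset.card_eq_zero.1 F.2.2) }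
    rw [homologyDim, boundaries, hbot (0 + 1) one_ne_zero, Submodule.map_bot,
      subquotientFinrank_bot, hcycles, finrank_chainSpace, Nat.card_unique]
  · refine subquotientFinrank_eq_zero fun z hz => ?_
    rw [mem_cycles, hbot q hq, Submodule.mem_bot] at hz
    exact hz.1 ▸ zero_mem _

end ExtendByZero

section Independence

variable {V : Type*}

@[ext]
theorem ext {K L : SimpComplex V} (h : K.faces = L.faces) : K = L := by
  cases K; cases L; congr

/-- The complex whose faces are the finite independent sets of the graph `G`. -/
def independenceComplex (G : SimpleGraph V) : SimpComplex V where
  faces := {F | G.IsIndepSet F}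
  down_closed := fun _ hF _ hH => hF.mono (Finset.coe_subset.2 hH)

variable [LinearOrder V] {G : SimpleGraph V} {W : Finset V} {u v : V}

theorem deletion_induced_insert (K : SimpComplex V) (hv : v ∉ W) :
    (K.induced (insert v W)).deletion v = K.induced W := by
  ext F
  constructor
  · exact fun ⟨hvF, hF, hFW⟩ => ⟨hF, (Finset.subset_insert_iff_of_notMem hvF).1 hFW⟩
  · exact fun ⟨hF, hFW⟩ => ⟨fun hvF => hv (hFW hvF), hF, hFW.trans (Finset.subset_insert v W)⟩

theorem insert_mem_faces_independenceComplex {F : Finset V} (hv : v ∉ F) :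
    insert v F ∈ (independenceComplex G).faces ↔
      F ∈ (independenceComplex G).faces ∧ ∀ w ∈ F, ¬G.Adj v w := by
  change G.IsIndepSet _ ↔ _
  rw [Finset.coe_insert, SimpleGraph.isIndepSet_iff,
    Set.pairwise_insert_of_notMem (Finset.mem_coe.not.2 hv)]
  simp only [G.adj_comm _ v, and_self]
  rfl

theorem link_induced_insert [DecidableRel G.Adj] (hv : v ∉ W) :
    ((independenceComplex G).induced (insert v W)).link v =
      (independenceComplex G).induced (W.filter fun w => ¬G.Adj v w) := by
  ext F
  change v ∉ F ∧ insert v F ∈ (independenceComplex G).faces ∧ insert v F ⊆ insert v W ↔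
    F ∈ (independenceComplex G).faces ∧ F ⊆ W.filter fun w => ¬G.Adj v w
  constructor
  · rintro ⟨hvF, hF, hFW⟩
    obtain ⟨hF, hFv⟩ := (insert_mem_faces_independenceComplex hvF).1 hF
    exact ⟨hF, fun w hw => Finset.mem_filter.2
      ⟨(Finset.insert_subset_insert_iff hvF).1 hFW hw, hFv w hw⟩⟩
  · rintro ⟨hF, hFW⟩
    have hvF : v ∉ F := fun h => hv (Finset.mem_filter.1 (hFW h)).1
    exact ⟨hvF, (insert_mem_faces_independenceComplex hvF).2
        ⟨hF, fun w hw => (Finset.mem_filter.1 (hFW hw)).2⟩,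
      Finset.insert_subset_insert v (hFW.trans (Finset.filter_subset _ _))⟩

variable [Fintype V] (k : Type*) [Field k]

theorem homologyDim_induced_eq_zero_of_isolated (hv : v ∈ W) (h : ∀ w ∈ W, ¬G.Adj v w) (q : ℕ) :
    homologyDim k ((independenceComplex G).induced W) q = 0 := by
  refine homologyDim_eq_zero_of_forall_insert_mem k (v := v) ?_ q
  rintro F ⟨hF, hFW⟩
  by_cases hvF : v ∈ F
  · rw [Finset.insert_eq_of_mem hvF]
    exact ⟨hF, hFW⟩
  · exact ⟨(insert_mem_faces_independenceComplex hvF).2 ⟨hF, fun w hw => h w (hFW hw)⟩,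
      Finset.insert_subset hv hFW⟩

theorem homologyDim_induced_insert_of_dominated (hv : v ∉ W) (hu : u ∈ W) (hvu : ¬G.Adj v u)
    (h : ∀ w ∈ W, G.Adj u w → G.Adj v w) (q : ℕ) :
    homologyDim k ((independenceComplex G).induced (insert v W)) (q + 1) =
      homologyDim k ((independenceComplex G).induced W) (q + 1) := by
  classical
  -- `u` is isolated among the non-neighbours of `v`, so the link of `v` is a cone.
  have hlink : ∀ q, homologyDim k
      (((independenceComplex G).induced (insert v W)).link v) q = 0 := by
    rw [link_induced_insert hv]
    refine homologyDim_induced_eq_zero_of_isolated k (Finset.mem_filter.2 ⟨hu, hvu⟩)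
      fun w hw huw => ?_
    exact (Finset.mem_filter.1 hw).2 (h w (Finset.mem_filter.1 hw).1 huw)
  rw [homologyDim_eq_deletion_of_link_eq_zero k hlink, deletion_induced_insert _ hv]

theorem homologyDim_induced_union_of_dominated {A : Finset V} (hAW : Disjoint A W) (hu : u ∈ W)
    (hAu : ∀ v ∈ A, ¬G.Adj v u) (h : ∀ v ∈ A, ∀ w ∈ W, G.Adj u w → G.Adj v w) (q : ℕ) :
    homologyDim k ((independenceComplex G).induced (A ∪ W)) (q + 1) =
      homologyDim k ((independenceComplex G).induced W) (q + 1) := by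
  induction A using Finset.induction_on with
  | empty => rw [Finset.empty_union]
  | insert v A hv ih =>
    rw [Finset.disjoint_insert_left] at hAW
    rw [Finset.forall_mem_insert] at hAu h
    have hvAW : v ∉ A ∪ W := Finset.notMem_union.2 ⟨hv, hAW.1⟩
    have hvu : ∀ w ∈ A ∪ W, G.Adj u w → G.Adj v w := by
      intro w hw huw
      rcases Finset.mem_union.1 hw with hwA | hwW
      · exact absurd huw.symm (hAu.2 w hwA)
      · exact h.1 w hwW huw
    rw [Finset.insert_union, homologyDim_induced_insert_of_dominated k hvAW
      (Finset.mem_union_right A hu) hAu.1 hvu, ih hAW.2 hAu.2 h.2]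

theorem homologyDim_induced_star (hu : u ∉ W) (hW : G.IsIndepSet W) (hne : W.Nonempty)
    (huW : ∀ w ∈ W, G.Adj u w) (q : ℕ) :
    homologyDim k ((independenceComplex G).induced (insert u W)) (q + 1) =
      if q = 0 then 1 else 0 := by
  classical
  set K := (independenceComplex G).induced (insert u W)
  have hdeletion : ∀ q, homologyDim k (K.deletion u) q = 0 := by
    obtain ⟨w, hw⟩ := hne
    rw [deletion_induced_insert _ hu]
    refine homologyDim_induced_eq_zero_of_isolated k hw fun v hv hwv => ?_
    exact hW hw hv hwv.ne hwv
  have hlink : homologyDim k (K.link u) q = if q = 0 then 1 else 0 := by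
    refine homologyDim_of_faces_eq_singleton_empty ?_ q
    rw [link_induced_insert hu, Finset.filter_eq_empty_iff.2 fun w hw => not_not_intro (huW w hw)]
    ext F
    refine ⟨fun hF => Finset.subset_empty.1 hF.2, ?_⟩
    rintro rfl
    exact ⟨by simp [independenceComplex], subset_rfl⟩
  have h_le := homologyDim_le_deletion_add_link k K u q
  have h_ge := homologyDim_link_le k K u q
  rw [hdeletion, hlink] at h_le h_ge
  omega

section BettiFine

variable {k} {K : SimpComplex V} {i j q : ℕ}

theorem bettiFine_eq_homologyDim (h : W.card = q + i + 2) :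
    bettiFine k K i W = homologyDim k (K.induced W) (q + 1) := by
  rw [bettiFine, if_pos (by omega), reducedBetti_eq_homologyDim,
    show W.card - i - 2 = q by omega]

theorem bettiFine_eq_zero (h : W.card < i + 2) : bettiFine k K i W = 0 :=
  if_neg h.not_ge

variable (k)

theorem bettiFine_filter_not_adj_le [DecidableRel G.Adj] (hv : v ∉ W)
    (hij : i + W.card = j + (W.filter fun w => ¬G.Adj v w).card) :
    bettiFine k (independenceComplex G) i (W.filter fun w => ¬G.Adj v w) ≤
      bettiFine k (independenceComplex G) j W +
        bettiFine k (independenceComplex G) j (insert v W) := by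
  rcases lt_or_ge (W.filter fun w => ¬G.Adj v w).card (i + 2) with hlt | hge
  · rw [bettiFine_eq_zero hlt]
    exact Nat.zero_le _
  obtain ⟨q, hq⟩ := Nat.exists_eq_add_of_le' hge
  have hqv : (insert v W).card = q + 1 + j + 2 := by
    rw [Finset.card_insert_of_notMem hv]
    omega
  rw [bettiFine_eq_homologyDim hq, bettiFine_eq_homologyDim (i := j) (q := q) (by omega),
    bettiFine_eq_homologyDim hqv, ← link_induced_insert hv,
    ← deletion_induced_insert (independenceComplex G) hv]
  exact (homologyDim_link_le k _ v (q + 1)).trans_eq (add_comm _ _)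

end BettiFine

end Independence

end SimpComplex

section Bipartite

variable {n m : ℕ}

theorem xVert_injective : Function.Injective (xVert : Fin n → Fin (n + m)) :=
  Fin.castAdd_injective n m

theorem yVert_injective : Function.Injective (yVert : Fin m → Fin (n + m)) :=
  Fin.natAdd_injective m n

theorem xVert_ne_yVert (x : Fin n) (y : Fin m) : xVert x ≠ yVert y :=
  Fin.ne_of_val_ne (x.2.trans_le (Nat.le_add_right n y)).ne

theorem disjoint_image_xVert_image_yVert (X : Finset (Fin n)) (Y : Finset (Fin m)) :
    Disjoint (X.image xVert) (Y.image yVert) := by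
  simp only [Finset.disjoint_iff_ne, Finset.forall_mem_image]
  exact fun x _ y _ => xVert_ne_yVert x y

theorem card_vset (X : Finset (Fin n)) (Y : Finset (Fin m)) :
    (vset X Y).card = X.card + Y.card := by
  rw [vset, Finset.card_union_of_disjoint (disjoint_image_xVert_image_yVert X Y),
    Finset.card_image_of_injective _ xVert_injective,
    Finset.card_image_of_injective _ yVert_injective]

theorem yVert_mem_vset {X : Finset (Fin n)} {Y : Finset (Fin m)} {y : Fin m} :
    yVert y ∈ vset X Y ↔ y ∈ Y := by
  simp [vset, yVert_injective.eq_iff, xVert_ne_yVert]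

theorem forall_mem_vset {X : Finset (Fin n)} {Y : Finset (Fin m)} {p : Fin (n + m) → Prop} :
    (∀ a ∈ vset X Y, p a) ↔ (∀ x ∈ X, p (xVert x)) ∧ ∀ y ∈ Y, p (yVert y) := by
  rw [vset, Finset.forall_mem_union, Finset.forall_mem_image, Finset.forall_mem_image]

theorem vset_insert_right (X : Finset (Fin n)) (Y : Finset (Fin m)) (y : Fin m) :
    vset X (insert y Y) = insert (yVert y) (vset X Y) := by
  rw [vset, vset, Finset.image_insert, Finset.union_insert]

theorem vset_insert_left (X : Finset (Fin n)) (Y : Finset (Fin m)) (x : Fin n) :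
    vset (insert x X) Y = X.image xVert ∪ insert (xVert x) (Y.image yVert) := by
  rw [vset, Finset.image_insert, Finset.insert_union, Finset.union_insert]

/-- The bipartite graph on `X ⊔ Y` with edge set `E`. -/
def bipartiteGraph (E : Finset (Fin n × Fin m)) : SimpleGraph (Fin (n + m)) :=
  SimpleGraph.fromRel fun a b => ∃ p ∈ E, xVert p.1 = a ∧ yVert p.2 = b

variable {E : Finset (Fin n × Fin m)}

theorem mem_nbr {x : Fin n} {y : Fin m} : y ∈ nbr E x ↔ (x, y) ∈ E :=
  Finset.mem_filter_univ y

theorem bipartiteGraph_adj_xVert_yVert {x : Fin n} {y : Fin m} :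
    (bipartiteGraph E).Adj (xVert x) (yVert y) ↔ y ∈ nbr E x := by
  simp [bipartiteGraph, mem_nbr, xVert_injective.eq_iff, yVert_injective.eq_iff, xVert_ne_yVert]

theorem not_bipartiteGraph_adj_xVert_xVert (x x' : Fin n) :
    ¬(bipartiteGraph E).Adj (xVert x) (xVert x') := by
  simp [bipartiteGraph, (xVert_ne_yVert _ _).symm]

theorem not_bipartiteGraph_adj_yVert_yVert (y y' : Fin m) :
    ¬(bipartiteGraph E).Adj (yVert y) (yVert y') := by
  simp [bipartiteGraph, xVert_ne_yVert]

theorem isIndepSet_image_yVert (Y : Finset (Fin m)) :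
    (bipartiteGraph E).IsIndepSet (Y.image yVert : Finset (Fin (n + m))) := by
  rw [Finset.coe_image]
  rintro _ ⟨y, -, rfl⟩ _ ⟨y', -, rfl⟩ -
  exact not_bipartiteGraph_adj_yVert_yVert y y'

theorem indepComplex_eq_independenceComplex (E : Finset (Fin n × Fin m)) :
    indepComplex E = independenceComplex (bipartiteGraph E) := by
  ext F
  constructor
  · rintro hF a ha b hb - ⟨-, ⟨p, hp, rfl, rfl⟩ | ⟨p, hp, rfl, rfl⟩⟩
    · exact hF p hp ⟨ha, hb⟩
    · exact hF p hp ⟨hb, ha⟩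
  · rintro hF p hp ⟨hx, hy⟩
    exact hF hx hy (xVert_ne_yVert _ _) (bipartiteGraph_adj_xVert_yVert.2 (mem_nbr.2 hp))

open scoped Classical in
theorem filter_not_adj_yVert_vset (X : Finset (Fin n)) (Y : Finset (Fin m)) (y : Fin m) :
    (vset X Y).filter (fun a => ¬(bipartiteGraph E).Adj (yVert y) a) =
      vset (X.filter fun x => y ∉ nbr E x) Y := by
  simp only [vset, Finset.filter_union, Finset.filter_image, not_bipartiteGraph_adj_yVert_yVert,
    SimpleGraph.adj_comm _ (yVert y) (xVert _), bipartiteGraph_adj_xVert_yVert, not_false_eq_true,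
    Finset.filter_true]

variable (k : Type*) [Field k] {i j : ℕ}

theorem bettiFine_vset_filter_le {X : Finset (Fin n)} {Y : Finset (Fin m)} {y : Fin m}
    (hy : y ∉ Y) (hij : i + X.card = j + (X.filter fun x => y ∉ nbr E x).card) :
    bettiFine k (indepComplex E) i (vset (X.filter fun x => y ∉ nbr E x) Y) ≤
      bettiFine k (indepComplex E) j (vset X Y) +
        bettiFine k (indepComplex E) j (vset X (insert y Y)) := by
  classical
  rw [indepComplex_eq_independenceComplex, vset_insert_right, ← filter_not_adj_yVert_vset]
  refine bettiFine_filter_not_adj_le k (yVert_mem_vset.not.2 hy) ?_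
  rw [filter_not_adj_yVert_vset, card_vset, card_vset]
  omega

-- The index changes with the number of discarded `x` so that the homological degrees match.
theorem sum_bettiFine_vset_filter_disjoint_le {X : Finset (Fin n)} {T Z : Finset (Fin m)}
    (hTZ : Disjoint T Z)
    (hij : i + X.card = j + (X.filter fun x => Disjoint (nbr E x) T).card) :
    ∑ Y ∈ Z.powerset,
        bettiFine k (indepComplex E) i (vset (X.filter fun x => Disjoint (nbr E x) T) Y) ≤
      ∑ Y ∈ (T ∪ Z).powerset, bettiFine k (indepComplex E) j (vset X Y) := by
  induction T using Finset.induction_on generalizing X j with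
  | empty =>
    simp only [Finset.disjoint_empty_right, Finset.filter_true, Finset.empty_union] at hij ⊢
    rw [Nat.add_right_cancel hij]
  | insert y T hy ih =>
    rw [Finset.disjoint_insert_left] at hTZ
    have hyTZ : y ∉ T ∪ Z := Finset.notMem_union.2 ⟨hy, hTZ.1⟩
    simp only [Finset.disjoint_insert_right, ← Finset.filter_filter] at hij ⊢
    set X₁ := X.filter fun x => y ∉ nbr E x
    have hle : (X₁.filter fun x => Disjoint (nbr E x) T).card ≤ X₁.card :=
      Finset.card_filter_le _ _
    obtain ⟨j₁, hj₁⟩ := Nat.exists_eq_add_of_le' (hle.trans (Nat.le_add_left _ i))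
    rw [Finset.insert_union, Finset.sum_powerset_insert hyTZ, ← Finset.sum_add_distrib]
    refine (ih hTZ.2 hj₁).trans (Finset.sum_le_sum fun Y hY => ?_)
    exact bettiFine_vset_filter_le k (fun h => hyTZ (Finset.mem_powerset.1 hY h))
      (show j₁ + X.card = j + X₁.card by omega)

theorem homologyDim_induced_vset_of_forall_nbr_subset {X : Finset (Fin n)} {x₀ : Fin n}
    (hx₀ : x₀ ∈ X) (h : ∀ x ∈ X, nbr E x₀ ⊆ nbr E x) (Y : Finset (Fin m)) (q : ℕ) :
    homologyDim k ((indepComplex E).induced (vset X Y)) (q + 1) =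
      homologyDim k ((indepComplex E).induced (insert (xVert x₀) (Y.image yVert))) (q + 1) := by
  conv_lhs => rw [← Finset.insert_erase hx₀, vset_insert_left]
  rw [indepComplex_eq_independenceComplex]
  refine homologyDim_induced_union_of_dominated k ?_ (Finset.mem_insert_self _ _) ?_ ?_ q
  · refine Finset.disjoint_insert_right.2 ⟨?_, disjoint_image_xVert_image_yVert _ _⟩
    rw [xVert_injective.mem_finset_image]
    exact Finset.notMem_erase x₀ X
  · exact Finset.forall_mem_image.2 fun x _ => not_bipartiteGraph_adj_xVert_xVert x x₀
  · simp only [Finset.forall_mem_image, Finset.forall_mem_insert, bipartiteGraph_adj_xVert_yVert]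
    exact fun x hx => ⟨fun hx₀ => absurd hx₀ (SimpleGraph.irrefl _),
      fun y _ hy => h x (Finset.mem_of_mem_erase hx) hy⟩

theorem homologyDim_induced_insert_xVert_image_yVert (x : Fin n) (Y : Finset (Fin m)) (q : ℕ) :
    homologyDim k ((indepComplex E).induced (insert (xVert x) (Y.image yVert))) (q + 1) =
      if Y ⊆ nbr E x ∧ Y.Nonempty ∧ q = 0 then 1 else 0 := by
  rw [indepComplex_eq_independenceComplex]
  rcases Y.eq_empty_or_nonempty with rfl | hne
  · rw [homologyDim_induced_eq_zero_of_isolated k (v := xVert x) (by simp) (by simp)]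
    simp
  by_cases hY : Y ⊆ nbr E x
  · have hx : xVert x ∉ Y.image yVert := by simp [(xVert_ne_yVert _ _).symm]
    rw [homologyDim_induced_star k hx (isIndepSet_image_yVert Y) (hne.image _)
      (Finset.forall_mem_image.2 fun y hy => bipartiteGraph_adj_xVert_yVert.2 (hY hy))]
    simp only [hY, hne, true_and]
  · obtain ⟨y, hyY, hyx⟩ := Finset.not_subset.1 hY
    have hy : yVert y ∈ insert (xVert x) (Y.image yVert) :=
      Finset.mem_insert_of_mem (Finset.mem_image_of_mem _ hyY)
    rw [homologyDim_induced_eq_zero_of_isolated k hy, if_neg fun h => hY h.1]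
    simp only [Finset.forall_mem_insert, Finset.forall_mem_image]
    exact ⟨fun h => hyx (bipartiteGraph_adj_xVert_yVert.1 h.symm),
      fun y' _ => not_bipartiteGraph_adj_yVert_yVert y y'⟩

theorem bettiFine_vset_of_forall_nbr_subset {X : Finset (Fin n)} {x₀ : Fin n} (hx₀ : x₀ ∈ X)
    (h : ∀ x ∈ X, nbr E x₀ ⊆ nbr E x) (i : ℕ) (Y : Finset (Fin m)) :
    bettiFine k (indepComplex E) i (vset X Y) =
      if Y ⊆ nbr E x₀ ∧ Y.Nonempty ∧ X.card + Y.card = i + 2 then 1 else 0 := by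
  rcases lt_or_ge (X.card + Y.card) (i + 2) with hlt | hge
  · rw [bettiFine_eq_zero (by rwa [card_vset]), if_neg fun h => hlt.ne h.2.2]
  · obtain ⟨q, hq⟩ := Nat.exists_eq_add_of_le' hge
    rw [bettiFine_eq_homologyDim (q := q) (by rw [card_vset, hq, add_assoc]),
      homologyDim_induced_vset_of_forall_nbr_subset k hx₀ h,
      homologyDim_induced_insert_xVert_image_yVert]
    simp only [hq, add_eq_right]

theorem sum_powerset_bettiFine_vset_of_forall_nbr_subset {X : Finset (Fin n)} {x₀ : Fin n}
    (hx₀ : x₀ ∈ X) (h : ∀ x ∈ X, nbr E x₀ ⊆ nbr E x) (i : ℕ) :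
    ∑ Y ∈ (nbr E x₀).powerset, bettiFine k (indepComplex E) i (vset X Y) =
      if X.card ≤ i + 1 then (degG E x₀).choose (i + 2 - X.card) else 0 := by
  have hterm : ∀ Y ∈ (nbr E x₀).powerset, bettiFine k (indepComplex E) i (vset X Y) =
      if X.card ≤ i + 1 ∧ Y.card = i + 2 - X.card then 1 else 0 := by
    intro Y hY
    rw [bettiFine_vset_of_forall_nbr_subset k hx₀ h]
    refine if_congr ?_ rfl rfl
    rw [and_iff_right (Finset.mem_powerset.1 hY), ← Finset.card_pos]
    omega
  rw [Finset.sum_congr rfl hterm]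
  split_ifs with hX
  · simp only [hX, true_and]
    rw [Finset.sum_boole, ← Finset.powersetCard_eq_filter, Finset.card_powersetCard, Nat.cast_id,
      degG]
  · simp only [hX, false_and, if_false, Finset.sum_const_zero]

theorem bettiCoarse_of_forall_nbr_subset {X : Finset (Fin n)} {x₀ : Fin n}
    (hx₀ : x₀ ∈ X) (h : ∀ x ∈ X, nbr E x₀ ⊆ nbr E x) (i : ℕ) :
    bettiCoarse k E i X = if X.card ≤ i + 1 then (degG E x₀).choose (i + 2 - X.card) else 0 := by
  rw [← sum_powerset_bettiFine_vset_of_forall_nbr_subset k hx₀ h, bettiCoarse]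
  refine (Finset.sum_subset (Finset.subset_univ _) fun Y _ hY => ?_).symm
  rw [bettiFine_vset_of_forall_nbr_subset k hx₀ h, if_neg]
  exact fun hY' => hY (Finset.mem_powerset.2 hY'.1)

theorem choose_degG_le_bettiCoarse {X : Finset (Fin n)} {x₀ : Fin n} (hx₀ : x₀ ∈ X)
    (hmin : ∀ x ∈ X, degG E x₀ ≤ degG E x) (hi : X.card ≤ i + 1) :
    (degG E x₀).choose (i + 2 - X.card) ≤ bettiCoarse k E i X := by
  set X₀ := X.filter fun x => Disjoint (nbr E x) (nbr E x₀)ᶜ with hX₀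
  have hx₀X₀ : x₀ ∈ X₀ := Finset.mem_filter.2 ⟨hx₀, disjoint_compl_right⟩
  have hnbr : ∀ x ∈ X₀, nbr E x₀ ⊆ nbr E x := by
    intro x hx
    rw [hX₀, Finset.mem_filter, disjoint_compl_right_iff] at hx
    exact (Finset.eq_of_subset_of_card_le hx.2 (hmin x hx.1)).ge
  have hpos : 0 < X₀.card := Finset.card_pos.2 ⟨x₀, hx₀X₀⟩
  obtain ⟨j, hj⟩ := Nat.exists_eq_add_of_le' (show X.card ≤ i + X₀.card by omega)
  have hsum := sum_bettiFine_vset_filter_disjoint_le k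
    (disjoint_compl_left (a := nbr E x₀)) hj.symm
  rw [sum_powerset_bettiFine_vset_of_forall_nbr_subset k hx₀X₀ hnbr, if_pos (by omega),
    Finset.union_comm, Finset.union_compl, Finset.powerset_univ] at hsum
  rwa [show i + 2 - X.card = j + 2 - X₀.card by omega]

theorem bettiCoarse_empty (E : Finset (Fin n × Fin m)) (i : ℕ) : bettiCoarse k E i ∅ = 0 := by
  refine Finset.sum_eq_zero fun Y _ => ?_
  rcases lt_or_ge Y.card (i + 2) with hlt | hge
  · exact bettiFine_eq_zero (by rwa [card_vset, Finset.card_empty, zero_add])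
  · obtain ⟨q, hq⟩ := Nat.exists_eq_add_of_le' hge
    obtain ⟨y, hy⟩ := Finset.card_pos.1 (show 0 < Y.card by omega)
    have hcard : (vset ∅ Y : Finset (Fin (n + m))).card = q + i + 2 := by
      rw [card_vset, Finset.card_empty, zero_add, hq, add_assoc]
    rw [bettiFine_eq_homologyDim hcard, indepComplex_eq_independenceComplex]
    exact homologyDim_induced_eq_zero_of_isolated k (yVert_mem_vset.2 hy)
      (forall_mem_vset.2 ⟨by simp, fun y' _ => not_bipartiteGraph_adj_yVert_yVert y y'⟩) _

theorem nbr_ferrers (E : Finset (Fin n × Fin m)) (x : Fin n) :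
    nbr (ferrers E) x = Finset.univ.filter fun y : Fin m => (y : ℕ) < degG E x := by
  simp only [nbr, ferrers, Finset.mem_filter_univ]

theorem nbr_ferrers_subset {x x' : Fin n} (h : degG E x ≤ degG E x') :
    nbr (ferrers E) x ⊆ nbr (ferrers E) x' := by
  rw [nbr_ferrers, nbr_ferrers]
  exact Finset.monotone_filter_right _ fun y _ hy => hy.trans_le h

theorem degG_ferrers (E : Finset (Fin n × Fin m)) (x : Fin n) :
    degG (ferrers E) x = degG E x := by
  have hle : degG E x ≤ m := (Finset.card_le_univ _).trans_eq (Fintype.card_fin m)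
  rw [degG, nbr_ferrers, Fin.card_filter_val_lt, min_eq_right hle]

end Bipartite

/-- **Theorem 1.1 (the Nagel–Reiner conjecture).**  Let `G` be a bipartite
graph on `X ⊔ Y` with edge ideal `I`, and let `J` be the edge ideal of the
Ferrers graph `H` associated with `G`.  Then for every `X' ⊆ X` and every
`i ≥ 0`, the `ℤⁿ`-graded Betti numbers satisfy
`β_{i,X',•}(I) ≥ β_{i,X',•}(J)`. -/
theorem betti_edge_ideal_ge_betti_ferrers (k : Type*) [Field k] (n m : ℕ)
    (E : Finset (Fin n × Fin m)) (X' : Finset (Fin n)) (i : ℕ) :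
    bettiCoarse k (ferrers E) i X' ≤ bettiCoarse k E i X' := by
  rcases X'.eq_empty_or_nonempty with rfl | hX'
  · rw [bettiCoarse_empty, bettiCoarse_empty]
  obtain ⟨x₀, hx₀, hmin⟩ := Finset.exists_min_image X' (degG E) hX'
  rw [bettiCoarse_of_forall_nbr_subset k hx₀ (fun x hx => nbr_ferrers_subset (hmin x hx)) i,
    degG_ferrers]
  split_ifs with hi
  · exact choose_degG_le_bettiCoarse k hx₀ hmin hi
  · exact Nat.zero_le _
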